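/- Let (X, N, φ, K, *) be a fuzzy strong φ-b-normed linear space whose t-norm * is continuous at (1,1), and let {x_1, …, x_n} be a linearly independent set in X. Then there exist c > 0 and δ ∈ (0,1) such that for every choice of scalars α_1, …, α_n with Σ|α_i| ≠ 0, N(α_1 x_1 + ⋯ + α_n x_n, K·c / φ(1/Σ_{i=1}^n |α_i|)) < 1 − δ. -/

import Mathlib

open Filter Topology

/-- A fuzzy strong φ-b-norm on a real linear space `X`. -/
structure FuzzyStrongPhiBNorm (X : Type*) [AddCommGroup X] [Module ℝ X] where
  N : X → ℝ → ℝ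
  phi : ℝ → ℝ
  K : ℝ
  op : ℝ → ℝ → ℝ
  K_ge_one : 1 ≤ K
  N_nonneg : ∀ x t, 0 ≤ N x t
  N_le_one : ∀ x t, N x t ≤ 1
  phi_even : ∀ t, phi (-t) = phi t
  phi_one : phi 1 = 1
  phi_strictMono : StrictMonoOn phi (Set.Ioi (0:ℝ))
  phi_cont : ContinuousOn phi (Set.Ioi (0:ℝ))
  phi_lim_zero : Tendsto phi (nhdsWithin 0 (Set.Ioi 0)) (nhds 0)
  phi_lim_top : Tendsto phi atTop atTop
  bN1 : ∀ x t, t ≤ 0 → N x t = 0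
  bN2 : ∀ x, (∀ t > 0, N x t = 1) ↔ x = 0
  bN3 : ∀ (c : ℝ) (x : X) (t : ℝ), 0 < t → phi c ≠ 0 → N (c • x) t = N x (t / phi c)
  bN4 : ∀ (x y : X) (s t : ℝ), op (N x s) (N y t) ≤ N (x + y) (s + K * t)
  bN5_mono : ∀ x : X, Monotone (N x)
  bN5_lim : ∀ x : X, Tendsto (N x) atTop (nhds 1)

/-- The t-norm is continuous at (1,1): sequences tending to 1 combine to 1. -/
def ContAtOneOne (op : ℝ → ℝ → ℝ) : Prop :=
  ∀ a b : ℕ → ℝ, Tendsto a atTop (nhds 1) → Tendsto b atTop (nhds 1) →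
    Tendsto (fun n => op (a n) (b n)) atTop (nhds 1)

/-!
On the compact sphere `∑ |β i| = 1` the combination `∑ β i • x i` depends continuously on `β` for
fuzzy convergence and, by linear independence, never vanishes. Near a nonzero vector `y` the fuzzy
norm stays away from `1`: if `N z (t / 2)` were close to `1` for some `z` close to `y`, continuity
of the t-norm at `(1, 1)` would push `N y t` above its value. Compactness makes the resulting bound
uniform on the sphere, and homogeneity `N (c • x) t = N x (t / φ c)` rescales it to all
coefficients.
-/

theorem ContAtOneOne.tendsto {op : ℝ → ℝ → ℝ} (hop : ContAtOneOne op) :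
    Tendsto (fun p : ℝ × ℝ => op p.1 p.2) (𝓝 (1, 1)) (𝓝 1) :=
  tendsto_of_seq_tendsto fun _ hu => hop _ _ hu.fst_nhds hu.snd_nhds

theorem isCompact_setOf_sum_abs_eq (ι : Type*) [Fintype ι] (r : ℝ) :
    IsCompact {b : ι → ℝ | ∑ i, |b i| = r} := by
  refine Metric.isCompact_of_isClosed_isBounded (isClosed_eq (by fun_prop) continuous_const)
    ((Metric.isBounded_closedBall (x := 0) (r := r)).subset fun b (hb : ∑ i, |b i| = r) => ?_)
  have hr : 0 ≤ r := hb ▸ Finset.sum_nonneg fun i _ => abs_nonneg (b i)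
  rw [mem_closedBall_zero_iff, pi_norm_le_iff_of_nonneg hr]
  exact fun i => hb ▸ Finset.single_le_sum (f := fun i => |b i|)
    (fun _ _ => abs_nonneg _) (Finset.mem_univ i)

namespace FuzzyStrongPhiBNorm

variable {X : Type*} [AddCommGroup X] [Module ℝ X] (F : FuzzyStrongPhiBNorm X)

theorem K_pos : 0 < F.K :=
  one_pos.trans_le F.K_ge_one

theorem phi_pos {s : ℝ} (hs : 0 < s) : 0 < F.phi s := by
  have hhalf : F.phi (s / 2) < F.phi s :=
    F.phi_strictMono (half_pos hs) hs (half_lt_self hs)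
  refine (le_of_tendsto F.phi_lim_zero ?_).trans_lt hhalf
  filter_upwards [Ioo_mem_nhdsGT (half_pos hs)] with u hu
  exact (F.phi_strictMono hu.1 (half_pos hs) hu.2).le

theorem phi_abs (s : ℝ) : F.phi |s| = F.phi s := by
  rcases abs_choice s with h | h <;> rw [h]
  exact F.phi_even s

theorem N_smul {c : ℝ} (hc : c ≠ 0) (x : X) {t : ℝ} (ht : 0 < t) :
    F.N (c • x) t = F.N x (t / F.phi c) :=
  F.bN3 c x t ht (F.phi_abs c ▸ (F.phi_pos (abs_pos.2 hc)).ne')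

theorem N_neg (x : X) {t : ℝ} (ht : 0 < t) : F.N (-x) t = F.N x t := by
  rw [← neg_one_smul ℝ x, F.N_smul (neg_ne_zero.2 one_ne_zero) x ht, F.phi_even, F.phi_one,
    div_one]

theorem N_zero {t : ℝ} (ht : 0 < t) : F.N 0 t = 1 :=
  (F.bN2 0).2 rfl t ht

theorem exists_N_lt_one {x : X} (hx : x ≠ 0) : ∃ t > 0, F.N x t < 1 := by
  by_contra! h
  exact hx ((F.bN2 x).1 fun t ht => (F.N_le_one x t).antisymm (h t ht))

theorem op_le_N_add (x y : X) (t : ℝ) :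
    F.op (F.N x (t / 2)) (F.N y (t / 2 / F.K)) ≤ F.N (x + y) t := by
  simpa only [mul_div_cancel₀ _ F.K_pos.ne', add_halves] using F.bN4 x y (t / 2) (t / 2 / F.K)

theorem tendsto_N_smul_zero (x : X) {t : ℝ} (ht : 0 < t) :
    Tendsto (fun s : ℝ => F.N (s • x) t) (𝓝 0) (𝓝 1) := by
  have hphi : Tendsto (fun s : ℝ => F.phi |s|) (𝓝[≠] 0) (𝓝[>] 0) :=
    (tendsto_nhdsWithin_iff.2 ⟨F.phi_lim_zero,
      eventually_mem_nhdsWithin.mono fun _ => F.phi_pos⟩).comp tendsto_abs_nhdsNE_zero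
  have hdiv : Tendsto (fun s : ℝ => t / F.phi |s|) (𝓝[≠] 0) atTop := by
    simpa only [div_eq_mul_inv, Function.comp_def] using
      (tendsto_inv_nhdsGT_zero.comp hphi).const_mul_atTop ht
  have hpunctured : Tendsto (fun s : ℝ => F.N (s • x) t) (𝓝[≠] 0) (𝓝 1) := by
    refine ((F.bN5_lim x).comp hdiv).congr' ?_
    filter_upwards [self_mem_nhdsWithin] with s hs
    rw [Function.comp_apply, F.phi_abs, F.N_smul hs x ht]
  have hzero : F.N ((0 : ℝ) • x) t = 1 := by rw [zero_smul, F.N_zero ht]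
  rw [← hzero] at hpunctured ⊢
  exact continuousAt_iff_punctured_nhds.2 hpunctured

/-- Convergence of `z` to `y` along a filter for the fuzzy norm: `N (z i - y) t → 1` for every
`t > 0`. The usual sequential notion is the case `l = atTop`; a general filter is allowed so that
continuity of a map into `X` can be expressed with `l = 𝓝 b`. -/
def Converges {ι : Type*} (z : ι → X) (l : Filter ι) (y : X) : Prop :=
  ∀ t > 0, Tendsto (fun i => F.N (z i - y) t) l (𝓝 1)

variable {F} {ι κ : Type*} {l : Filter ι}

namespace Converges

theorem const (y : X) : F.Converges (fun _ => y) l y := fun t ht => by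
  simpa only [sub_self, F.N_zero ht] using tendsto_const_nhds

theorem smul_const {a : ι → ℝ} {b : ℝ} (ha : Tendsto a l (𝓝 b)) (x : X) :
    F.Converges (fun i => a i • x) l (b • x) := fun t ht => by
  simpa only [← sub_smul, Function.comp_def] using
    (F.tendsto_N_smul_zero x ht).comp (tendsto_sub_nhds_zero_iff.2 ha)

theorem add (hop : ContAtOneOne F.op) {z w : ι → X} {y v : X} (hz : F.Converges z l y)
    (hw : F.Converges w l v) : F.Converges (fun i => z i + w i) l (y + v) := fun t ht => by
  have hlower := hop.tendsto.comp
    ((hz (t / 2) (half_pos ht)).prodMk_nhds (hw (t / 2 / F.K) (div_pos (half_pos ht) F.K_pos)))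
  refine tendsto_of_tendsto_of_tendsto_of_le_of_le hlower tendsto_const_nhds (fun i => ?_)
    fun i => F.N_le_one _ _
  rw [add_sub_add_comm]
  exact F.op_le_N_add _ _ t

theorem sum (hop : ContAtOneOne F.op) {z : κ → ι → X} {y : κ → X} (s : Finset κ)
    (hz : ∀ k ∈ s, F.Converges (z k) l (y k)) :
    F.Converges (fun i => ∑ k ∈ s, z k i) l (∑ k ∈ s, y k) := by
  induction s using Finset.cons_induction with
  | empty => exact const 0
  | cons k s hk ih =>
    simp only [Finset.sum_cons]
    exact (hz k (Finset.mem_cons_self k s)).add hop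
      (ih fun j hj => hz j (Finset.mem_cons_of_mem hj))

theorem eventually_N_lt (hop : ContAtOneOne F.op) {z : ι → X} {y : X} (hz : F.Converges z l y)
    (hy : y ≠ 0) : ∀ᶠ p in 𝓝[>] (0 : ℝ) ×ˢ l, F.N (z p.2) p.1 < 1 - p.1 := by
  obtain ⟨t, ht, hyt⟩ := F.exists_N_lt_one hy
  have hopt : ∀ᶠ q : ℝ × ℝ in 𝓝 1 ×ˢ 𝓝 1, F.N y t < F.op q.1 q.2 := by
    rw [← nhds_prod_eq]
    exact hop.tendsto.eventually_const_lt hyt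
  obtain ⟨A, hA, B, hB, hAB⟩ := eventually_prod_iff.1 hopt
  obtain ⟨δ, hδ, hδA⟩ := Metric.eventually_nhds_iff.1 hA
  have hsmall : ∀ᶠ ε in 𝓝[>] (0 : ℝ), ε < min δ (t / 2) :=
    eventually_nhdsWithin_of_eventually_nhds (eventually_lt_nhds (lt_min hδ (half_pos ht)))
  have hdiff : ∀ᶠ i in l, B (F.N (z i - y) (t / 2 / F.K)) :=
    (hz _ (div_pos (half_pos ht) F.K_pos)).eventually hB
  filter_upwards [hsmall.prod_mk hdiff] with ⟨ε, i⟩ ⟨hε, hBi⟩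
  by_contra! hge
  have hmono : F.N (z i) ε ≤ F.N (z i) (t / 2) :=
    F.bN5_mono (z i) (hε.le.trans (min_le_right _ _))
  have hAi : A (F.N (z i) (t / 2)) := hδA <| by
    rw [Real.dist_eq, abs_sub_lt_iff]
    constructor <;> linarith [F.N_le_one (z i) (t / 2), hε.trans_le (min_le_left _ _)]
  have htriangle := F.op_le_N_add (z i) (-(z i - y)) t
  rw [F.N_neg _ (div_pos (half_pos ht) F.K_pos), neg_sub, add_sub_cancel] at htriangle
  exact (hAB hAi hBi).not_ge htriangle

end Converges

theorem eventually_forall_N_lt_of_isCompact (hop : ContAtOneOne F.op) {T : Type*}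
    [TopologicalSpace T] {s : Set T} (hs : IsCompact s) {f : T → X}
    (hf : ∀ b ∈ s, F.Converges f (𝓝 b) (f b)) (hf₀ : ∀ b ∈ s, f b ≠ 0) :
    ∀ᶠ ε in 𝓝[>] (0 : ℝ), ∀ b ∈ s, F.N (f b) ε < 1 - ε := by
  have hprod : ∀ᶠ p in 𝓝[>] (0 : ℝ) ×ˢ 𝓝ˢ s, F.N (f p.2) p.1 < 1 - p.1 :=
    hs.mem_prod_nhdsSet_of_forall fun b hb => (hf b hb).eventually_N_lt hop (hf₀ b hb)
  exact hprod.curry.mono fun _ h => h.self_of_nhdsSet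

theorem eventually_forall_N_sum_smul_lt (hop : ContAtOneOne F.op) [Fintype κ] {x : κ → X}
    (hx : LinearIndependent ℝ x) :
    ∀ᶠ ε in 𝓝[>] (0 : ℝ), ∀ β : κ → ℝ, ∑ i, |β i| = 1 → F.N (∑ i, β i • x i) ε < 1 - ε := by
  refine eventually_forall_N_lt_of_isCompact hop (isCompact_setOf_sum_abs_eq κ 1)
    (fun b _ => .sum hop _ fun i _ => .smul_const ((continuous_apply i).tendsto b) (x i))
    fun b (hb : ∑ i, |b i| = 1) hb₀ => ?_
  have hzero := Fintype.linearIndependent_iff.1 hx b hb₀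
  simp [hzero] at hb

theorem N_sum_smul_div_phi (F : FuzzyStrongPhiBNorm X) [Fintype κ] (x : κ → X) (α : κ → ℝ)
    {a t : ℝ} (ha : a ≠ 0) (ht : 0 < t) :
    F.N (∑ i, α i • x i) (t / F.phi a) = F.N (∑ i, (a * α i) • x i) t := by
  simp only [mul_smul, ← Finset.smul_sum, F.N_smul ha _ ht]

end FuzzyStrongPhiBNorm

theorem stmt9_general {X : Type*} [AddCommGroup X] [Module ℝ X]
    (F : FuzzyStrongPhiBNorm X) (hop : ContAtOneOne F.op)
    {ι : Type*} [Fintype ι] (x : ι → X) (hx : LinearIndependent ℝ x) :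
    ∃ c > 0, ∃ δ ∈ Set.Ioo (0 : ℝ) 1, ∀ α : ι → ℝ,
      (∑ i, |α i|) ≠ 0 →
      F.N (∑ i, α i • x i) (F.K * c / F.phi (1 / ∑ i, |α i|)) < 1 - δ := by
  obtain ⟨ε, hε, hε01⟩ := ((FuzzyStrongPhiBNorm.eventually_forall_N_sum_smul_lt hop hx).and
    (Ioo_mem_nhdsGT one_pos)).exists
  refine ⟨ε / F.K, div_pos hε01.1 F.K_pos, ε, hε01, fun α hα => ?_⟩
  have hpos : 0 < 1 / ∑ i, |α i| :=
    one_div_pos.2 ((Finset.sum_nonneg fun i _ => abs_nonneg (α i)).lt_of_ne' hα)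
  rw [mul_div_cancel₀ _ F.K_pos.ne', F.N_sum_smul_div_phi x α hpos.ne' hε01.1]
  refine hε _ ?_
  simp only [abs_mul, ← Finset.mul_sum, abs_of_pos hpos, one_div_mul_cancel hα]

theorem stmt9 {X : Type*} [AddCommGroup X] [Module ℝ X]
    (F : FuzzyStrongPhiBNorm X) (hop : ContAtOneOne F.op)
    (n : ℕ) (x : Fin n → X) (hx : LinearIndependent ℝ x) :
    ∃ c > 0, ∃ δ ∈ Set.Ioo (0:ℝ) 1, ∀ α : Fin n → ℝ,
      (∑ i, |α i|) ≠ 0 →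
      F.N (∑ i, α i • x i) (F.K * c / F.phi (1 / ∑ i, |α i|)) < 1 - δ :=
  stmt9_general F hop x hx
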